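/- arXiv:1411.4541 — 3 statements merged into one kernel-verified Lean document; each statement's English description precedes it below -/
import Mathlib

section
/- For every real t and real y > 0, ∫_{-∞}^{∞} e(u² y) e(−t u) du = ((1+i)/(2√y)) · e(−t²/(4y)), where e(x) = exp(2πix) and the integral is understood as an improper (Fresnel-type) integral. -/
open Complex Filter

/-- `e x = exp(2πix)`. -/
noncomputable def e (x : ℝ) : ℂ := Complex.exp (2 * Real.pi * Complex.I * x)

/-- The line integral of an entire function along a segment, in terms of a primitive. -/
lemma integral_segment_eq_sub_of_hasDerivAt {f P : ℂ → ℂ} (hf : Continuous f)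
    (hP : ∀ z, HasDerivAt P (f z) z) (z w : ℂ) (A : ℝ) :
    ∫ u in (0 : ℝ)..A, f (z + u * w) * w = P (z + A * w) - P z := by
  have hd : ∀ u : ℝ, HasDerivAt (fun u : ℝ => P (z + u * w)) (f (z + u * w) * w) u := by
    intro u
    have hline : HasDerivAt (fun v : ℂ => z + v * w) w u := by
      simpa using ((hasDerivAt_id (u : ℂ)).mul_const w).const_add z
    exact ((hP (z + u * w)).comp (u : ℂ) hline).comp_ofReal
  rw [intervalIntegral.integral_eq_sub_of_hasDerivAt (fun u _ => hd u)]
  · simp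
  · exact Continuous.intervalIntegrable (by fun_prop) _ _

lemma norm_integral_cexp_I_mul_sq_vertical_le {b A : ℝ} (hb : 0 < b) (hA : 0 < A) :
    ‖∫ v in (0 : ℝ)..A, cexp (I * b * (A + v * I) ^ 2) * I‖ ≤ 1 / (2 * b * A) := by
  have hc : -(2 * b * A) ≠ 0 := by
    have : 0 < 2 * b * A := by positivity
    linarith
  calc ‖∫ v in (0 : ℝ)..A, cexp (I * b * (A + v * I) ^ 2) * I‖
      ≤ ∫ v in (0 : ℝ)..A, ‖cexp (I * b * (A + v * I) ^ 2) * I‖ :=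
        intervalIntegral.norm_integral_le_integral_norm hA.le
    _ = ∫ v in (0 : ℝ)..A, Real.exp (-(2 * b * A) * v) := by
        refine intervalIntegral.integral_congr fun v _ => ?_
        simp only [norm_mul, norm_I, mul_one, norm_exp]
        congr 1
        simp [pow_two]
        ring
    _ = (1 - Real.exp (-(2 * b * A) * A)) / (2 * b * A) := by
        rw [intervalIntegral.integral_comp_mul_left (fun x => Real.exp x) hc, integral_exp]
        simp only [mul_zero, Real.exp_zero, smul_eq_mul]
        field_simp
        ring
    _ ≤ 1 / (2 * b * A) := by
        gcongr
        linarith [Real.exp_pos (-(2 * b * A) * A)]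

/-- The Fresnel integral over a half-line, by rotating the contour to the diagonal. -/
lemma tendsto_integral_cexp_I_mul_sq {b : ℝ} (hb : 0 < b) :
    Tendsto (fun A : ℝ => ∫ u in (0 : ℝ)..A, cexp (I * b * (u : ℂ) ^ 2)) atTop
      (nhds ((1 + I) * ((√(Real.pi / (2 * b)) / 2 : ℝ) : ℂ))) := by
  have hdiff : Differentiable ℂ fun z : ℂ => cexp (I * b * z ^ 2) := by fun_prop
  obtain ⟨P, hP⟩ := hdiff.isExactOn_univ
  have hseg := integral_segment_eq_sub_of_hasDerivAt hdiff.continuous fun z => hP z (Set.mem_univ z)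
  have htriangle : ∀ A : ℝ, ∫ u in (0 : ℝ)..A, cexp (I * b * (u : ℂ) ^ 2) =
      (1 + I) * ((∫ u in (0 : ℝ)..A, Real.exp (-(2 * b) * u ^ 2) : ℝ) : ℂ) -
        ∫ v in (0 : ℝ)..A, cexp (I * b * (A + v * I) ^ 2) * I := by
    intro A
    have hreal := hseg 0 1 A
    have hdiag := hseg 0 (1 + I) A
    have hvert := hseg A I A
    simp only [zero_add, mul_one] at hreal hdiag
    have hgauss : ∀ u : ℝ, cexp (I * b * ((u : ℂ) * (1 + I)) ^ 2) =
        ((Real.exp (-(2 * b) * u ^ 2) : ℝ) : ℂ) := by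
      intro u
      push_cast
      congr 1
      linear_combination (2 * b * u ^ 2 + I * b * u ^ 2 : ℂ) * I_sq
    simp only [hgauss, intervalIntegral.integral_mul_const, intervalIntegral.integral_ofReal]
      at hdiag
    rw [hreal, hvert, mul_comm, hdiag]
    ring_nf
  have hgaussian : Tendsto (fun A : ℝ => ∫ u in (0 : ℝ)..A, Real.exp (-(2 * b) * u ^ 2)) atTop
      (nhds (√(Real.pi / (2 * b)) / 2)) := by
    rw [← integral_gaussian_Ioi]
    exact MeasureTheory.intervalIntegral_tendsto_integral_Ioi 0
      (integrable_exp_neg_mul_sq (by positivity)).integrableOn tendsto_id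
  have hvertical : Tendsto (fun A : ℝ => ∫ v in (0 : ℝ)..A, cexp (I * b * (A + v * I) ^ 2) * I)
      atTop (nhds 0) := by
    refine squeeze_zero_norm' (a := fun A => 1 / (2 * b * A)) ?_ ?_
    · filter_upwards [eventually_gt_atTop 0] with A hA
      exact norm_integral_cexp_I_mul_sq_vertical_le hb hA
    · exact tendsto_const_nhds.div_atTop (tendsto_id.const_mul_atTop (by positivity))
  simp only [htriangle]
  simpa using (((continuous_ofReal.tendsto _).comp hgaussian).const_mul (1 + I)).sub hvertical

/-- Completing the square in the phase. -/
lemma e_sq_mul_mul_e_neg_mul (t u : ℝ) {y : ℝ} (hy : y ≠ 0) :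
    e (u ^ 2 * y) * e (-t * u) =
      e (-t ^ 2 / (4 * y)) *
        cexp (I * (2 * Real.pi * y : ℝ) * ((u - t / (2 * y) : ℝ) : ℂ) ^ 2) := by
  have hy' : (y : ℂ) ≠ 0 := ofReal_ne_zero.mpr hy
  simp only [e, ← Complex.exp_add]
  congr 1
  push_cast
  field_simp
  ring

lemma integral_comp_sub_symm_of_even {g : ℝ → ℂ} (hg : Continuous g) (heven : ∀ x, g (-x) = g x)
    (s A : ℝ) :
    ∫ u in (-A)..A, g (u - s) = (∫ u in (0 : ℝ)..(A - s), g u) + ∫ u in (0 : ℝ)..(A + s), g u := by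
  have hneg : ∫ u in (0 : ℝ)..(A + s), g u = ∫ u in (-A - s)..0, g u := by
    have h := intervalIntegral.integral_comp_neg (a := 0) (b := A + s) g
    simp only [heven, neg_zero] at h
    rw [h]
    congr 1
    ring
  rw [intervalIntegral.integral_comp_sub_right, hneg, add_comm,
    intervalIntegral.integral_add_adjacent_intervals (hg.intervalIntegrable _ _)
      (hg.intervalIntegrable _ _)]

/-- The Fresnel-type integral identity
`∫ e(u²y) e(−tu) du = (1+i)/(2√y) · e(−t²/(4y))`, as an improper integral. -/
theorem stmt_10 (t y : ℝ) (hy : 0 < y) :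
    Tendsto (fun A : ℝ => ∫ u in (-A)..A, e (u ^ 2 * y) * e (-t * u)) atTop
      (nhds ((1 + Complex.I) / (2 * Real.sqrt y) * e (-t ^ 2 / (4 * y)))) := by
  have hlim := tendsto_integral_cexp_I_mul_sq (b := 2 * Real.pi * y) (by positivity)
  have hsqrt : √(Real.pi / (2 * (2 * Real.pi * y))) = 1 / (2 * √y) := by
    rw [show Real.pi / (2 * (2 * Real.pi * y)) = (1 / 2) ^ 2 / y by field_simp,
      Real.sqrt_div (by positivity), Real.sqrt_sq (by norm_num)]
    field_simp
  rw [hsqrt] at hlim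
  simp only [e_sq_mul_mul_e_neg_mul t _ hy.ne', intervalIntegral.integral_const_mul]
  have hshift : ∀ A : ℝ, _ := integral_comp_sub_symm_of_even
    (g := fun x : ℝ => cexp (I * (2 * Real.pi * y : ℝ) * (x : ℂ) ^ 2)) (by fun_prop)
    (fun x => by simp) (t / (2 * y))
  simp only [hshift]
  have hsum := (hlim.comp (tendsto_atTop_add_const_right atTop (-(t / (2 * y))) tendsto_id)).add
    (hlim.comp (tendsto_atTop_add_const_right atTop (t / (2 * y)) tendsto_id))
  have hvalue : (1 + I) / (2 * √y) * e (-t ^ 2 / (4 * y)) = e (-t ^ 2 / (4 * y)) *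
      ((1 + I) * ((1 / (2 * √y) / 2 : ℝ) : ℂ) + (1 + I) * ((1 / (2 * √y) / 2 : ℝ) : ℂ)) := by
    push_cast
    ring
  rw [hvalue]
  exact hsum.const_mul _
end

section
/- With Ei the exponential integral and 0 < ε < 1/2, ∫_{(ε,1−ε)∪(1+ε,∞)} e^{−t} log|1−t| dt = (1/e)(−Ei(1) + Ei(ε) − Ei(−ε)) + O(ε log(1/ε)). -/
open MeasureTheory

/-- The exponential integral `Ei(x) = ∫₀ˣ (eᵗ−1)/t dt + log|x| + γ`. -/
noncomputable def Ei (x : ℝ) : ℝ :=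
  (∫ t in (0:ℝ)..x, (Real.exp t - 1) / t) + Real.log |x| + Real.eulerMascheroniConstant

open Set intervalIntegral

/-- `∫₀^∞ e^{-u} log u du = -γ`. -/
theorem integral_exp_neg_mul_log :
    ∫ u in Ioi (0 : ℝ), Real.exp (-u) * Real.log u = -Real.eulerMascheroniConstant := by
  have hG : HasDerivAt Complex.Gamma
      (∫ t : ℝ in Ioi 0, (t : ℂ) ^ ((1 : ℂ) - 1) * (Real.log t * Real.exp (-t))) 1 := by
    have hopen : IsOpen {s : ℂ | 0 < s.re} := Complex.continuous_re.isOpen_preimage _ isOpen_Ioi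
    apply (Complex.hasDerivAt_GammaIntegral (by simp)).congr_of_eventuallyEq
    filter_upwards [hopen.mem_nhds (show (0 : ℝ) < (1 : ℂ).re by simp)] with a ha
      using Complex.Gamma_eq_integral ha
  have h := hG.unique Complex.hasDerivAt_Gamma_one
  have hcast : (fun t : ℝ => (t : ℂ) ^ ((1 : ℂ) - 1) * (Real.log t * Real.exp (-t))) =
      fun t : ℝ => ((Real.exp (-t) * Real.log t : ℝ) : ℂ) := by
    ext t
    push_cast
    simp [mul_comm]
  rw [hcast, integral_complex_ofReal] at h
  exact_mod_cast h

theorem integrableOn_exp_neg_mul_log :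
    IntegrableOn (fun u : ℝ => Real.exp (-u) * Real.log u) (Ioi 0) := by
  refine Integrable.of_integral_ne_zero ?_
  rw [integral_exp_neg_mul_log]
  have := Real.one_half_lt_eulerMascheroniConstant
  linarith

theorem continuous_dslope_exp : Continuous (dslope Real.exp 0) :=
  continuous_iff_continuousAt.2 fun b => by
    rcases eq_or_ne b 0 with rfl | hb
    · exact continuousAt_dslope_same.2 Real.differentiableAt_exp
    · exact (continuousAt_dslope_of_ne hb).2 Real.continuous_exp.continuousAt

theorem intervalIntegrable_exp_sub_one_div (a b : ℝ) :
    IntervalIntegrable (fun t : ℝ => (Real.exp t - 1) / t) volume a b := by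
  refine (continuous_dslope_exp.intervalIntegrable a b).congr_ae ?_
  refine ae_restrict_of_ae ?_
  filter_upwards [Measure.ae_ne volume (0 : ℝ)] with t ht
  rw [dslope_of_ne _ ht, slope_def_field]
  simp

/-- `∫₀¹ eᵛ log v dv = -∫₀¹ (eᵛ - 1)/v dv`, by parts. -/
theorem integral_exp_mul_log :
    ∫ v in (0 : ℝ)..1, Real.exp v * Real.log v =
      -∫ v in (0 : ℝ)..1, (Real.exp v - 1) / v := by
  have hlog : IntervalIntegrable (fun v : ℝ => Real.exp v * Real.log v) volume 0 1 :=
    intervalIntegrable_log'.continuousOn_mul Real.continuous_exp.continuousOn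
  have hdiv := intervalIntegrable_exp_sub_one_div 0 1
  have hcont : Continuous fun v : ℝ => (Real.exp v - 1) * Real.log v := by
    have : (fun v : ℝ => (Real.exp v - 1) * Real.log v) =
        fun v => dslope Real.exp 0 v * (v * Real.log v) := by
      ext v
      have := sub_smul_dslope Real.exp 0 v
      simp only [sub_zero, smul_eq_mul, Real.exp_zero] at this
      rw [← this]
      ring
    rw [this]
    exact continuous_dslope_exp.mul Real.continuous_mul_log
  have h := integral_eq_sub_of_hasDerivAt_of_le zero_le_one hcont.continuousOn
    (f' := fun v => Real.exp v * Real.log v + (Real.exp v - 1) / v)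
    (fun v hv => by
      simpa [div_eq_mul_inv] using
        ((Real.hasDerivAt_exp v).sub_const 1).fun_mul (Real.hasDerivAt_log hv.1.ne'))
    (hlog.add hdiv)
  rw [integral_add hlog hdiv] at h
  simp at h
  linarith

/-- A weight bounded by `M` changes the size of `∫ log` over a subinterval of `[0, 1]` by at most
a factor `M`. -/
theorem abs_integral_mul_log_le {g : ℝ → ℝ} {a b M : ℝ} (ha : 0 ≤ a) (hab : a ≤ b) (hb : b ≤ 1)
    (hg : ∀ x ∈ Ioc a b, |g x| ≤ M) :
    |∫ x in a..b, g x * Real.log x| ≤ M * -(b * Real.log b - a * Real.log a - b + a) := by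
  rw [← integral_log, ← intervalIntegral.integral_neg, ← intervalIntegral.integral_const_mul,
    ← Real.norm_eq_abs]
  refine norm_integral_le_of_norm_le hab (ae_of_all _ fun x hx => ?_)
    ((intervalIntegrable_log'.neg).const_mul M)
  have hlog : Real.log x ≤ 0 :=
    Real.log_nonpos (ha.trans hx.1.le) (hx.2.trans hb)
  rw [Real.norm_eq_abs, abs_mul, abs_of_nonpos hlog]
  exact mul_le_mul_of_nonneg_right (hg x hx) (by linarith)

theorem abs_Ei_sub_Ei_neg_le {ε : ℝ} (h0 : 0 ≤ ε) (h1 : ε ≤ 1) :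
    |Ei ε - Ei (-ε)| ≤ 4 * ε := by
  have hsplit : Ei ε - Ei (-ε) = ∫ t in (-ε)..ε, (Real.exp t - 1) / t := by
    rw [← integral_interval_sub_left (intervalIntegrable_exp_sub_one_div 0 ε)
      (intervalIntegrable_exp_sub_one_div 0 (-ε))]
    simp only [Ei, abs_neg]
    ring
  rw [hsplit, ← Real.norm_eq_abs]
  refine (intervalIntegral.norm_integral_le_of_norm_le_const (C := 2) fun t ht => ?_).trans ?_
  · rw [uIoc_of_le (by linarith)] at ht
    have ht1 : |t| ≤ 1 := abs_le.2 ⟨by linarith [ht.1], by linarith [ht.2]⟩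
    rw [Real.norm_eq_abs, abs_div]
    exact div_le_of_le_mul₀ (abs_nonneg _) zero_le_two (Real.abs_exp_sub_one_le ht1)
  · rw [abs_of_nonneg (by linarith)]
    linarith

theorem setIntegral_Ioo_exp_neg_mul_log {ε : ℝ} (h1 : ε ≤ 1 / 2) :
    ∫ t in Ioo ε (1 - ε), Real.exp (-t) * Real.log |1 - t| =
      1 / Real.exp 1 * ∫ v in ε..(1 - ε), Real.exp v * Real.log v := by
  rw [← integral_Ioc_eq_integral_Ioo, ← integral_of_le (by linarith),
    ← intervalIntegral.integral_const_mul]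
  have h := integral_comp_sub_left (a := ε) (b := 1 - ε)
    (fun v => 1 / Real.exp 1 * (Real.exp v * Real.log v)) 1
  rw [sub_sub_cancel] at h
  rw [← h]
  congr 1 with t
  rw [Real.log_abs, Real.exp_sub, Real.exp_neg]
  field_simp

theorem setIntegral_Ioi_exp_neg_mul_log (ε : ℝ) :
    ∫ t in Ioi (1 + ε), Real.exp (-t) * Real.log |1 - t| =
      1 / Real.exp 1 * ∫ u in Ioi ε, Real.exp (-u) * Real.log u := by
  have h := (measurePreserving_add_left volume (1 : ℝ)).setIntegral_preimage_emb
    (measurableEmbedding_addLeft 1) (fun t => Real.exp (-t) * Real.log |1 - t|) (Ioi (1 + ε))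
  rw [← h, ← MeasureTheory.integral_const_mul]
  simp only [preimage_const_add_Ioi, add_sub_cancel_left]
  congr 1 with u
  rw [show 1 - (1 + u) = -u by ring, abs_neg, Real.log_abs, neg_add, Real.exp_add,
    Real.exp_neg 1]
  ring

/-- The exact error term in the expansion of the truncated integral. -/
theorem integral_truncated_eq {ε : ℝ} (h0 : 0 < ε) (h1 : ε ≤ 1 / 2) :
    (∫ t in Ioo ε (1 - ε), Real.exp (-t) * Real.log |1 - t|) +
        (∫ t in Ioi (1 + ε), Real.exp (-t) * Real.log |1 - t|) -
        (1 / Real.exp 1) * (-(Ei 1) + Ei ε - Ei (-ε)) =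
      -(1 / Real.exp 1 * ((∫ v in (0 : ℝ)..ε, Real.exp v * Real.log v) +
        (∫ v in (1 - ε)..1, Real.exp v * Real.log v) +
        (∫ u in (0 : ℝ)..ε, Real.exp (-u) * Real.log u) + (Ei ε - Ei (-ε)))) := by
  have hint (a b : ℝ) : IntervalIntegrable (fun v : ℝ => Real.exp v * Real.log v) volume a b :=
    intervalIntegrable_log'.continuousOn_mul Real.continuous_exp.continuousOn
  have hleft := integral_add_adjacent_intervals (hint 0 ε) (hint ε (1 - ε))
  have hright := integral_add_adjacent_intervals (hint 0 (1 - ε)) (hint (1 - ε) 1)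
  have htail := integral_interval_add_Ioi integrableOn_exp_neg_mul_log
    (integrableOn_exp_neg_mul_log.mono_set (Ioi_subset_Ioi h0.le))
  have hEi : Ei 1 = (∫ v in (0 : ℝ)..1, (Real.exp v - 1) / v) +
      Real.eulerMascheroniConstant := by simp [Ei]
  rw [integral_exp_neg_mul_log] at htail
  rw [integral_exp_mul_log] at hright
  rw [setIntegral_Ioo_exp_neg_mul_log h1, setIntegral_Ioi_exp_neg_mul_log, hEi]
  linear_combination 1 / Real.exp 1 * (hleft + hright + htail)

/-- `∫_{(ε,1−ε)∪(1+ε,∞)} e^{−t} log|1−t| dt = (1/e)(−Ei(1) + Ei(ε) − Ei(−ε)) + O(ε log(1/ε))`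
as `ε → 0⁺`, with an absolute implied constant. -/
theorem stmt_12 :
    ∃ C : ℝ, ∀ ε : ℝ, 0 < ε → ε < 1 / 2 →
      |(∫ t in Set.Ioo ε (1 - ε), Real.exp (-t) * Real.log |1 - t|) +
          (∫ t in Set.Ioi (1 + ε), Real.exp (-t) * Real.log |1 - t|) -
          (1 / Real.exp 1) * (-(Ei 1) + Ei ε - Ei (-ε))| ≤
        C * (ε * Real.log (1 / ε)) := by
  refine ⟨32, fun ε h0 h1 => ?_⟩
  have hexp {x : ℝ} (hx : x ≤ 1) : |Real.exp x| ≤ 3 := by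
    rw [Real.abs_exp]
    exact (Real.exp_le_exp.2 hx).trans (by linarith [Real.exp_one_lt_d9])
  have hzero := abs_integral_mul_log_le (g := Real.exp) le_rfl h0.le (by linarith)
    fun x hx => hexp (by linarith [hx.2])
  have hone := abs_integral_mul_log_le (g := Real.exp) (a := 1 - ε) (b := 1) (by linarith)
    (by linarith) le_rfl fun x hx => hexp hx.2
  have hneg := abs_integral_mul_log_le (g := fun u => Real.exp (-u)) le_rfl h0.le (by linarith)
    fun x hx => hexp (by linarith [hx.1])
  have hEi := abs_Ei_sub_Ei_neg_le h0.le (by linarith)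
  have hnear : (1 - ε) * Real.log (1 - ε) ≤ 0 :=
    mul_nonpos_of_nonneg_of_nonpos (by linarith)
      (Real.log_nonpos (by linarith) (by linarith))
  have hε : ε ≤ 2 * (ε * Real.log (1 / ε)) := by
    have hlog : Real.log 2 ≤ Real.log (1 / ε) :=
      Real.log_le_log two_pos ((le_div_iff₀ h0).2 (by linarith))
    nlinarith [Real.log_two_gt_d9]
  have hinv : 1 / Real.exp 1 ≤ 1 :=
    (div_le_one (Real.exp_pos 1)).2 (Real.one_le_exp zero_le_one)
  rw [integral_truncated_eq h0 h1.le, abs_neg, abs_mul, abs_of_pos (by positivity)]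
  refine (mul_le_of_le_one_left (abs_nonneg _) hinv).trans ?_
  refine (abs_add_le _ _).trans ?_
  refine (add_le_add_left (abs_add_three _ _ _) _).trans ?_
  simp only [Real.log_one, one_div, Real.log_inv] at *
  linarith
end

section
/- Let d be prime and χ a primitive Dirichlet character mod d. For c coprime to d and integers a₁, r, ℓ₂, one has ∑_{a₂ mod cd} χ(a₂) S(−a₁a₂, r, c) e(a₂ℓ₂/(cd)) = τ(χ)·χ(c ℓ₂) · ∑_{a₂ mod c} S(−a₁a₂ d, r, c) e(a₂ℓ₂/c) / √d · √d, i.e. equals √d·χ(cℓ₂) times ∑_{a₂ mod c} S(−a₁ a₂ d, r, c) e(a₂ ℓ₂ / c), when χ is the real quadratic character mod d ≡ 1 (mod 4). -/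
open Complex

/-- The Kloosterman sum `S(n, m, c)`. -/
noncomputable def klS (n m : ℤ) (c : ℕ) [NeZero c] : ℂ :=
  ∑ a : (ZMod c)ˣ,
    e (((n * ((a : ZMod c).val : ℤ) + m * (((a⁻¹ : (ZMod c)ˣ) : ZMod c).val : ℤ) : ℤ) : ℝ) / c)

namespace Polynomial

variable {R : Type*} [CommRing R]

/-- The Euler operator `X * d/dX` on polynomials. -/
noncomputable def eulerOp (R : Type*) [CommRing R] : Module.End R R[X] :=
  LinearMap.mulLeft R X ∘ₗ derivative

lemma eulerOp_apply (f : R[X]) : eulerOp R f = X * derivative f := rfl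

lemma eulerOp_pow_C_mul_X_pow (a : R) (k n : ℕ) :
    (eulerOp R ^ n) (C a * X ^ k) = C (a * (k : R) ^ n) * X ^ k := by
  induction n with
  | zero => simp
  | succ n ih =>
    rw [pow_succ', Module.End.mul_apply, ih, eulerOp_apply, derivative_C_mul_X_pow]
    rcases k with _ | k
    · simp
    · simp only [Nat.add_sub_cancel, map_mul, map_pow]
      ring

lemma eval_one_eulerOp_pow_X_sub_one_pow_mul (n : ℕ) (g : R[X]) :
    ((eulerOp R ^ n) ((X - 1) ^ n * g)).eval 1 = n.factorial * g.eval 1 := by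
  induction n generalizing g with
  | zero => simp
  | succ n ih =>
    have h : eulerOp R ((X - 1) ^ (n + 1) * g) =
        (X - 1) ^ n * (X * ((n + 1 : R[X]) * g + (X - 1) * derivative g)) := by
      rw [eulerOp_apply, derivative_mul, derivative_pow]
      simp
      ring
    rw [pow_succ, Module.End.mul_apply, h, ih]
    simp [Nat.factorial_succ]
    ring

lemma eval_one_eulerOp_pow_eq_zero {n : ℕ} {f : R[X]} (hf : (X - 1) ^ (n + 1) ∣ f) :
    ((eulerOp R ^ n) f).eval 1 = 0 := by
  obtain ⟨g, rfl⟩ := hf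
  rw [pow_succ, mul_assoc, eval_one_eulerOp_pow_X_sub_one_pow_mul]
  simp

lemma eval_one_eulerOp_pow_prod {ι : Type*} (s : Finset ι) (f : ι → R[X])
    (hf : ∀ i ∈ s, (f i).eval 1 = 0) :
    ((eulerOp R ^ s.card) (∏ i ∈ s, f i)).eval 1 =
      s.card.factorial * ∏ i ∈ s, (derivative (f i)).eval 1 := by
  have h : ∀ i ∈ s, ∃ g : R[X], f i = (X - 1) * g := fun i hi => by
    have := dvd_iff_isRoot.2 (hf i hi)
    rwa [C_1] at this
  choose! g hg using h
  have hd : ∀ i ∈ s, (derivative (f i)).eval 1 = (g i).eval 1 := fun i hi => by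
    rw [hg i hi]
    simp
  rw [Finset.prod_congr rfl hg, Finset.prod_mul_distrib, Finset.prod_const,
    eval_one_eulerOp_pow_X_sub_one_pow_mul, eval_prod, Finset.prod_congr rfl hd]

/-- Modulo `p`, the `p`-th cyclotomic polynomial is `(X - 1) ^ (p - 1)`. -/
lemma cyclotomic_self_zmod (p : ℕ) [hp : Fact p.Prime] :
    cyclotomic p (ZMod p) = (X - 1) ^ (p - 1) := by
  have h := cyclotomic_mul_prime_eq_pow_of_not_dvd (ZMod p) (p := p) (n := 1)
    (Nat.Prime.not_dvd_one hp.out)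
  rwa [one_mul, cyclotomic_one] at h

lemma X_sub_one_pow_dvd_map_of_aeval_eq_zero {p : ℕ} [hp : Fact p.Prime] {ζ : ℂ}
    (hζ : IsPrimitiveRoot ζ p) {f : ℤ[X]} (hf : aeval ζ f = 0) :
    (X - 1) ^ (p - 1) ∣ f.map (Int.castRingHom (ZMod p)) := by
  have h := minpoly.isIntegrallyClosed_dvd (hζ.isIntegral hp.out.pos) hf
  rw [← cyclotomic_eq_minpoly hζ hp.out.pos] at h
  rw [← cyclotomic_self_zmod, ← map_cyclotomic p (Int.castRingHom (ZMod p))]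
  exact Polynomial.map_dvd _ h

end Polynomial

section ProductFormula

/-- The square of the product `∏ (ζ ^ (2l) - ζ ^ (-2l))` over `1 ≤ l ≤ (p - 1) / 2`. -/
lemma IsPrimitiveRoot.sq_prod_pow_sub_pow {m : ℕ} (hm : Even m) {ζ : ℂ}
    (hζ : IsPrimitiveRoot ζ (2 * m + 1)) :
    (∏ l ∈ Finset.range m, (ζ ^ (2 * (l + 1)) - ζ ^ (2 * m + 1 - 2 * (l + 1)))) ^ 2 =
      ((2 * m + 1 : ℕ) : ℂ) := by
  have hμ : IsPrimitiveRoot (ζ ^ 4) (2 * m + 1) := by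
    refine hζ.pow_of_coprime 4 ?_
    rw [show 4 = 2 ^ 2 by norm_num]
    exact Nat.Coprime.pow_left 2 (by simp)
  have h := hμ.prod_one_sub_pow_eq_order
  rw [two_mul, Finset.prod_range_add, ← Finset.prod_range_reflect (n := m)
    (f := fun k => 1 - (ζ ^ 4) ^ (m + k + 1)), ← Finset.prod_mul_distrib] at h
  rw [← Finset.prod_pow]
  have key : ∀ l ∈ Finset.range m, (ζ ^ (2 * (l + 1)) - ζ ^ (2 * m + 1 - 2 * (l + 1))) ^ 2 =
      -1 * ((1 - (ζ ^ 4) ^ (l + 1)) * (1 - (ζ ^ 4) ^ (m + (m - 1 - l) + 1))) := by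
    intro l hl
    have hl := Finset.mem_range.1 hl
    have h1 : ζ ^ (2 * (l + 1)) * ζ ^ (2 * m + 1 - 2 * (l + 1)) = 1 := by
      rw [← pow_add, show 2 * (l + 1) + (2 * m + 1 - 2 * (l + 1)) = 2 * m + 1 by lia,
        hζ.pow_eq_one]
    have h2 : (ζ ^ 4) ^ (l + 1) = (ζ ^ (2 * (l + 1))) ^ 2 := by ring
    have h3 : (ζ ^ 4) ^ (m + (m - 1 - l) + 1) = (ζ ^ (2 * m + 1 - 2 * (l + 1))) ^ 2 := by
      rw [← pow_mul, ← pow_mul, show 4 * (m + (m - 1 - l) + 1) =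
        (2 * m + 1 - 2 * (l + 1)) * 2 + (2 * m + 1) * 2 by lia, pow_add, pow_mul ζ (2 * m + 1),
        hζ.pow_eq_one]
      simp
    rw [h2, h3]
    generalize ζ ^ (2 * (l + 1)) = u at *
    generalize ζ ^ (2 * m + 1 - 2 * (l + 1)) = v at *
    linear_combination (u * v + 1 - 2) * h1
  rw [Finset.prod_congr rfl key, Finset.prod_mul_distrib, h, Finset.prod_const, Finset.card_range,
    hm.neg_one_pow]
  push_cast
  ring

/-- For `ζ = exp (2πi / (4q + 1))` the product `∏ (ζ ^ (2l) - ζ ^ (-2l))` is positive. -/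
lemma prod_exp_pow_sub_pow_pos (q : ℕ) :
    ∃ x : ℝ, 0 < x ∧ ∏ l ∈ Finset.range (2 * q),
      (exp (2 * Real.pi * I / (4 * q + 1 : ℕ)) ^ (2 * (l + 1)) -
        exp (2 * Real.pi * I / (4 * q + 1 : ℕ)) ^ (4 * q + 1 - 2 * (l + 1))) = x := by
  set p : ℝ := 4 * q + 1 with hp
  have hp0 : 0 < p := by positivity
  have hpC : ((4 * q + 1 : ℕ) : ℂ) = (p : ℂ) := by simp [hp]
  have hpC0 : (p : ℂ) ≠ 0 := by exact_mod_cast hp0.ne'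
  have key : ∀ l ∈ Finset.range (2 * q),
      (exp (2 * Real.pi * I / (4 * q + 1 : ℕ)) ^ (2 * (l + 1)) -
        exp (2 * Real.pi * I / (4 * q + 1 : ℕ)) ^ (4 * q + 1 - 2 * (l + 1))) =
      2 * I * Real.sin (4 * (l + 1) * Real.pi / p) := by
    intro l hl
    have hl := Finset.mem_range.1 hl
    rw [← exp_nat_mul, ← exp_nat_mul, hpC, Nat.cast_sub (by lia), hpC]
    have e1 : ((2 * (l + 1) : ℕ) : ℂ) * (2 * Real.pi * I / p) =
        ((4 * (l + 1) * Real.pi / p : ℝ) : ℂ) * I := by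
      push_cast
      ring
    have e2 : ((p : ℂ) - ((2 * (l + 1) : ℕ) : ℂ)) * (2 * Real.pi * I / p) =
        -((4 * (l + 1) * Real.pi / p : ℝ) : ℂ) * I + 2 * Real.pi * I := by
      push_cast
      field_simp
      ring
    rw [e1, e2, exp_add, exp_two_pi_mul_I, mul_one, ofReal_sin, sin]
    linear_combination (exp (↑(4 * (↑l + 1) * Real.pi / p) * I) -
      exp (-↑(4 * (↑l + 1) * Real.pi / p) * I)) * I_sq
  rw [Finset.prod_congr rfl key, two_mul, Finset.prod_range_add, ← Finset.prod_mul_distrib]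
  refine ⟨∏ l ∈ Finset.range q, (-4 * Real.sin (4 * (l + 1) * Real.pi / p) *
    Real.sin (4 * ((q + l : ℕ) + 1) * Real.pi / p)), Finset.prod_pos fun l hl => ?_, ?_⟩
  · have hl : (l : ℝ) + 1 ≤ q := by exact_mod_cast Finset.mem_range.1 hl
    have hl0 : (0 : ℝ) ≤ l := by positivity
    have h1 : 0 < Real.sin (4 * (l + 1) * Real.pi / p) := by
      apply Real.sin_pos_of_pos_of_lt_pi
      · positivity
      · rw [div_lt_iff₀ hp0]
        nlinarith [Real.pi_pos]
    have h2 : Real.sin (4 * ((q + l : ℕ) + 1) * Real.pi / p) < 0 := by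
      rw [← Real.sin_sub_two_pi]
      push_cast
      apply Real.sin_neg_of_neg_of_neg_pi_lt
      · rw [sub_neg, div_lt_iff₀ hp0]
        nlinarith [Real.pi_pos]
      · rw [lt_sub_iff_add_lt, lt_div_iff₀ hp0]
        nlinarith [Real.pi_pos]
    nlinarith [mul_pos h1 (neg_pos.2 h2)]
  · push_cast
    refine Finset.prod_congr rfl fun l _ => ?_
    linear_combination (4 * sin (4 * (l + 1) * Real.pi / p) *
      sin (4 * (q + l + 1) * Real.pi / p)) * I_sq

end ProductFormula

section GaussSumSign

open Polynomial

lemma ZMod.sq_factorial_half {p m : ℕ} [Fact p.Prime] (hpm : p = 2 * m + 1) (hm : Even m) :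
    ((m.factorial : ZMod p)) ^ 2 = -1 := by
  have hp0 : (2 * m + 1 : ZMod p) = 0 := by
    exact_mod_cast (ZMod.natCast_eq_zero_iff (2 * m + 1) p).2 hpm.dvd
  rw [← ZMod.wilsons_lemma p, show p - 1 = m + m by lia, ← Finset.prod_range_add_one_eq_factorial,
    ← Finset.prod_range_add_one_eq_factorial, Finset.prod_range_add,
    ← Finset.prod_range_reflect (fun k => m + k + 1), sq]
  push_cast
  congr 1
  have key : ∀ l ∈ Finset.range m, ((m : ZMod p) + ((m - 1 - l : ℕ) : ZMod p) + 1) =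
      -1 * ((l : ZMod p) + 1) := by
    intro l hl
    have hl := Finset.mem_range.1 hl
    have : ((m - 1 - l : ℕ) : ZMod p) + (l + 1) = m := by
      exact_mod_cast congrArg (Nat.cast (R := ZMod p)) (show m - 1 - l + (l + 1) = m by lia)
    linear_combination this + hp0
  rw [Finset.prod_congr rfl key, Finset.prod_mul_distrib, Finset.prod_const, Finset.card_range,
    hm.neg_one_pow, one_mul]

lemma ZMod.sum_pow_card_sub_one (p : ℕ) [hp : Fact p.Prime] :
    ∑ j : ZMod p, j ^ (p - 1) = -1 := by
  classical
  simp_rw [ZMod.pow_card_sub_one]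
  rw [Finset.sum_boole, Finset.filter_ne' , Finset.card_erase_of_mem (Finset.mem_univ _),
    Finset.card_univ, ZMod.card, Nat.cast_sub hp.out.one_le]
  simp

/-- If the quadratic Gauss sum equals `ε` times the product `∏ (ζ ^ (2l) - ζ ^ (-2l))` for an
integer `ε`, then `ε ≡ 1` modulo `p`. -/
lemma intCast_eq_one_of_sum_quadraticChar_eq {p m : ℕ} [hp : Fact p.Prime]
    (hpm : p = 2 * m + 1) (hm : Even m) (hm0 : 0 < m) {ζ : ℂ} (hζ : IsPrimitiveRoot ζ p) (ε : ℤ)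
    (h : ∑ j : ZMod p, (quadraticChar (ZMod p) j : ℂ) * ζ ^ j.val =
      ε * ∏ l ∈ Finset.range m, (ζ ^ (2 * (l + 1)) - ζ ^ (p - 2 * (l + 1)))) :
    (ε : ZMod p) = 1 := by
  set f : ℤ[X] := ∑ j : ZMod p, C (quadraticChar (ZMod p) j) * X ^ j.val -
    C ε * ∏ l ∈ Finset.range m, (X ^ (2 * (l + 1)) - X ^ (p - 2 * (l + 1))) with hf
  have hfζ : aeval ζ f = 0 := by
    simp only [hf, map_sub, map_sum, map_mul, map_prod, map_pow, aeval_X, aeval_C,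
      algebraMap_int_eq, Int.coe_castRingHom]
    exact sub_eq_zero.2 h
  have hdvd := (pow_dvd_pow (X - 1) (show m + 1 ≤ p - 1 by lia)).trans
    (X_sub_one_pow_dvd_map_of_aeval_eq_zero hζ hfζ)
  have h0 := eval_one_eulerOp_pow_eq_zero hdvd
  have hchar : ringChar (ZMod p) ≠ 2 := by
    rw [ZMod.ringChar_zmod_n]
    lia
  have hmap : f.map (Int.castRingHom (ZMod p)) =
      ∑ j : ZMod p, C (j ^ m) * X ^ j.val -
        (ε : ZMod p) • ∏ l ∈ Finset.range m, (X ^ (2 * (l + 1)) - X ^ (p - 2 * (l + 1))) := by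
    have hq : ∀ j : ZMod p, ((quadraticChar (ZMod p) j : ℤ) : ZMod p) = j ^ m := fun j => by
      rw [quadraticChar_eq_pow_of_char_ne_two' hchar, ZMod.card, show p / 2 = m by lia]
    simp only [hf, Polynomial.map_sub, Polynomial.map_sum, Polynomial.map_mul, Polynomial.map_pow,
      map_X, Polynomial.map_prod, map_C, Int.coe_castRingHom, hq, smul_eq_C_mul]
  have hprod := eval_one_eulerOp_pow_prod (R := ZMod p) (Finset.range m)
    (fun l => X ^ (2 * (l + 1)) - X ^ (p - 2 * (l + 1))) (by simp)
  have hder : ∀ l ∈ Finset.range m, (derivative (X ^ (2 * (l + 1)) - X ^ (p - 2 * (l + 1)) :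
      (ZMod p)[X])).eval 1 = 2 ^ 2 * ((l + 1 : ℕ) : ZMod p) := by
    intro l hl
    have hl := Finset.mem_range.1 hl
    have hc : ((p - 2 * (l + 1) : ℕ) : ZMod p) = - ((2 * (l + 1) : ℕ) : ZMod p) := by
      rw [Nat.cast_sub (by lia)]
      simp
    simp only [derivative_sub, derivative_X_pow, eval_sub, eval_mul, eval_C, eval_pow, eval_X,
      one_pow, mul_one, hc]
    push_cast
    ring
  have h2 : (2 : ZMod p) ^ (2 * m) = 1 := by
    rw [show 2 * m = p - 1 by lia]
    refine ZMod.pow_card_sub_one_eq_one fun h2 => hchar ?_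
    have : p ∣ 2 := (ZMod.natCast_eq_zero_iff 2 p).1 (by exact_mod_cast h2)
    rw [ZMod.ringChar_zmod_n]
    exact (Nat.prime_dvd_prime_iff_eq hp.out Nat.prime_two).1 this
  rw [Finset.card_range, Finset.prod_congr rfl hder, Finset.prod_mul_distrib, Finset.prod_const,
    Finset.card_range, ← pow_mul, h2, one_mul, ← Nat.cast_prod,
    Finset.prod_range_add_one_eq_factorial, ← sq, ZMod.sq_factorial_half hpm hm] at hprod
  have hsum : ∀ j : ZMod p, j ^ m * ((j.val : ℕ) : ZMod p) ^ m = j ^ (p - 1) := fun j => by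
    rw [ZMod.natCast_zmod_val, ← pow_add, show m + m = p - 1 by lia]
  rw [hmap, map_sub, map_smul, eval_sub, eval_smul, hprod, map_sum, eval_finsetSum] at h0
  simp only [eulerOp_pow_C_mul_X_pow, eval_mul, eval_C, eval_pow, eval_X, one_pow, mul_one, hsum,
    ZMod.sum_pow_card_sub_one, smul_eq_mul] at h0
  linear_combination h0

lemma ZMod.stdAddChar_eq_exp_pow {p : ℕ} [NeZero p] (j : ZMod p) :
    ZMod.stdAddChar j = exp (2 * Real.pi * I / p) ^ j.val := by
  have := ZMod.stdAddChar_coe (N := p) (j.val : ℤ)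
  rw [Int.cast_natCast, ZMod.natCast_zmod_val] at this
  rw [this, ← exp_nat_mul]
  congr 1
  push_cast
  ring

/-- A nontrivial complex character of order two modulo an odd prime is the quadratic character. -/
lemma DirichletCharacter.eq_quadraticChar {d : ℕ} [Fact d.Prime] {χ : DirichletCharacter ℂ d}
    (hχ2 : χ ^ 2 = 1) (hχ1 : χ ≠ 1) (a : ZMod d) : χ a = (quadraticChar (ZMod d) a : ℂ) := by
  have hsq : ∀ b : ZMod d, b ≠ 0 → χ (b * b) = 1 := fun b hb => by
    have := DFunLike.congr_fun hχ2 b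
    rwa [MulChar.pow_apply' _ two_ne_zero, MulChar.one_apply hb.isUnit, sq, ← map_mul] at this
  by_cases ha : a = 0
  · simp [ha, MulChar.map_zero]
  by_cases has : IsSquare a
  · rw [(quadraticChar_one_iff_isSquare ha).2 has]
    obtain ⟨b, rfl⟩ := has
    simpa using hsq b (by rintro rfl; simp at ha)
  · obtain ⟨u, hu⟩ := MulChar.ne_one_iff.1 hχ1
    have hu0 : (u : ZMod d) ≠ 0 := u.ne_zero
    have hus : ¬ IsSquare (u : ZMod d) := by
      rintro ⟨b, hb⟩
      refine hu ?_
      rw [hb]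
      exact hsq b (by rintro rfl; simp at hb)
    have hau : IsSquare (a * u) := by
      rw [← quadraticChar_one_iff_isSquare (mul_ne_zero ha hu0), map_mul,
        quadraticChar_neg_one_iff_not_isSquare.2 has, quadraticChar_neg_one_iff_not_isSquare.2 hus]
      norm_num
    obtain ⟨b, hb⟩ := hau
    have h1 : χ a * χ u = 1 := by
      rw [← map_mul, hb]
      exact hsq b (by rintro rfl; simp [ha] at hb)
    have h2 : χ u * χ u = 1 := by rw [← map_mul]; exact hsq _ hu0
    have h3 : χ u = -1 := (mul_self_eq_one_iff.1 h2).resolve_left hu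
    rw [quadraticChar_neg_one_iff_not_isSquare.2 has]
    rw [h3] at h1
    push_cast
    linear_combination -h1

/-- Gauss's evaluation of the quadratic Gauss sum for a prime `d ≡ 1 (mod 4)`. -/
theorem gaussSum_eq_sqrt {d : ℕ} [hd : Fact d.Prime] (hd4 : d % 4 = 1)
    {χ : DirichletCharacter ℂ d} (hχ2 : χ ^ 2 = 1) (hχ1 : χ ≠ 1) :
    gaussSum χ ZMod.stdAddChar = (Real.sqrt d : ℂ) := by
  have hχ := DirichletCharacter.eq_quadraticChar hχ2 hχ1
  have hquad : χ.IsQuadratic := fun a => by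
    rcases quadraticChar_isQuadratic (ZMod d) a with h | h | h <;> simp [hχ a, h]
  have hneg : χ (-1) = 1 := by
    rw [hχ, (quadraticChar_one_iff_isSquare (neg_ne_zero.2 one_ne_zero)).2
      (ZMod.exists_sq_eq_neg_one_iff.2 (by lia))]
    simp
  have hG := gaussSum_sq hχ1 hquad (ZMod.isPrimitive_stdAddChar d)
  rw [hneg, one_mul, ZMod.card] at hG
  obtain ⟨q, hq⟩ : ∃ q, d = 4 * q + 1 := ⟨d / 4, by lia⟩
  have hq0 : 0 < q := Nat.pos_of_ne_zero fun h => hd.out.one_lt.ne' (by simp [hq, h])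
  set ζ : ℂ := exp (2 * Real.pi * I / d) with hζdef
  have hζ : IsPrimitiveRoot ζ d := isPrimitiveRoot_exp d hd.out.ne_zero
  obtain ⟨x, hx0, hx⟩ := prod_exp_pow_sub_pow_pos q
  rw [← hq, ← hζdef] at hx
  have hdm : d = 2 * (2 * q) + 1 := by lia
  have hx2 := (hdm ▸ hζ).sq_prod_pow_sub_pow (even_two_mul q)
  rw [← hdm, hx] at hx2
  have hxd : x = Real.sqrt d := by
    rw [eq_comm, Real.sqrt_eq_iff_mul_self_eq (by positivity) hx0.le, ← sq]
    exact_mod_cast hx2.symm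
  have hsum : gaussSum χ ZMod.stdAddChar =
      ∑ j : ZMod d, (quadraticChar (ZMod d) j : ℂ) * ζ ^ j.val :=
    Finset.sum_congr rfl fun j _ => by rw [hχ, ZMod.stdAddChar_eq_exp_pow]
  rcases sq_eq_sq_iff_eq_or_eq_neg.1 (hG.trans hx2.symm) with h | h
  · rw [h, hxd]
  · exfalso
    have := intCast_eq_one_of_sum_quadraticChar_eq hdm (even_two_mul q) (by lia) hζ (-1)
      (by rw [← hsum, hx, h]; simp)
    have h2 : ((2 : ℕ) : ZMod d) = 0 := by
      push_cast at this ⊢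
      linear_combination -this
    have := Nat.le_of_dvd two_pos ((ZMod.natCast_eq_zero_iff 2 d).1 h2)
    lia

end GaussSumSign

section ChineseRemainder

lemma e_intCast_div (k : ℤ) (N : ℕ) [NeZero N] :
    e ((k : ℝ) / N) = ZMod.stdAddChar (k : ZMod N) := by
  rw [ZMod.stdAddChar_coe, e]
  congr 1
  push_cast
  ring

lemma e_add (x y : ℝ) : e (x + y) = e x * e y := by
  rw [e, e, e, ← Complex.exp_add]
  congr 1
  push_cast
  ring

lemma klS_congr {n n' : ℤ} (m : ℤ) {c : ℕ} [NeZero c] (h : (n : ZMod c) = n') :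
    klS n m c = klS n' m c := by
  simp only [klS, e_intCast_div]
  push_cast
  rw [h]

lemma e_intCast_mul_div_congr {a b : ℤ} (l : ℤ) {N : ℕ} [NeZero N] (h : (a : ZMod N) = b) :
    e (((a * l : ℤ) : ℝ) / N) = e (((b * l : ℤ) : ℝ) / N) := by
  simp only [e_intCast_div]
  push_cast
  rw [h]

/-- Every residue modulo `c * d` is uniquely `x * d + y * c` with `x` mod `c` and `y` mod `d`. -/
lemma ZMod.bijective_val_mul_add_val_mul {c d : ℕ} [NeZero c] [NeZero d] (h : Nat.Coprime c d) :
    Function.Bijective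
      (fun z : ZMod c × ZMod d => ((z.1.val * d + z.2.val * c : ℕ) : ZMod (c * d))) := by
  rw [Fintype.bijective_iff_injective_and_card]
  refine ⟨?_, by simp [ZMod.card]⟩
  rintro ⟨x, y⟩ ⟨x', y'⟩ hxy
  have hc := congrArg (ZMod.castHom (dvd_mul_right c d) (ZMod c)) hxy
  have hd := congrArg (ZMod.castHom (dvd_mul_left d c) (ZMod d)) hxy
  simp only [map_natCast] at hc hd
  push_cast at hc hd
  simp only [ZMod.natCast_zmod_val, ZMod.natCast_self, mul_zero, add_zero, zero_add] at hc hd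
  have hdc : IsUnit (d : ZMod c) := (ZMod.isUnit_iff_coprime d c).2 h.symm
  have hcd : IsUnit (c : ZMod d) := (ZMod.isUnit_iff_coprime c d).2 h
  rw [hdc.mul_left_inj] at hc
  rw [hcd.mul_left_inj] at hd
  rw [hc, hd]

end ChineseRemainder

lemma DirichletCharacter.sum_mul_e_eq {d : ℕ} [hd : Fact (Nat.Prime d)] (hd4 : d % 4 = 1)
    {χ : DirichletCharacter ℂ d} (hχ2 : χ ^ 2 = 1) (hχ1 : χ ≠ 1) (l : ℤ) :
    ∑ y : ZMod d, χ y * e ((((y.val : ℤ) * l : ℤ) : ℝ) / d) = χ l * (Real.sqrt d : ℂ) := by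
  have hprim : χ.IsPrimitive :=
    ((Nat.dvd_prime hd.out).1 χ.conductor_dvd_level).resolve_left
      fun h => hχ1 (DirichletCharacter.eq_one_iff_conductor_eq_one.2 h)
  have hinv : χ⁻¹ = χ := by
    rw [inv_eq_iff_mul_eq_one, ← sq, hχ2]
  have h := gaussSum_mulShift_of_isPrimitive ZMod.stdAddChar hprim (l : ZMod d)
  rw [hinv, gaussSum_eq_sqrt hd4 hχ2 hχ1] at h
  rw [← h]
  refine Finset.sum_congr rfl fun y _ => ?_
  rw [e_intCast_div, AddChar.mulShift_apply]
  push_cast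
  rw [ZMod.natCast_zmod_val, mul_comm y]

/-- Twisted Poisson/CRT evaluation: for `χ` the real quadratic character mod a prime
`d ≡ 1 (mod 4)` and `gcd(c,d) = 1`,
`∑_{a₂ mod cd} χ(a₂) S(−a₁a₂, r, c) e(a₂ℓ₂/(cd)) = √d · χ(cℓ₂) ∑_{a₂ mod c} S(−a₁a₂d, r, c) e(a₂ℓ₂/c)`. -/
theorem stmt_14 (d : ℕ) [Fact (Nat.Prime d)] (hd4 : d % 4 = 1)
    (χ : DirichletCharacter ℂ d) (hχ2 : χ ^ 2 = 1) (hχ1 : χ ≠ 1)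
    (c : ℕ) [NeZero c] (hcd : Nat.Coprime c d) (a₁ r ℓ₂ : ℤ) :
    ∑ a₂ : ZMod (c * d),
      χ (ZMod.castHom (dvd_mul_left d c) (ZMod d) a₂) *
        klS (-(a₁ * (a₂.val : ℤ))) r c * e ((((a₂.val : ℤ) * ℓ₂ : ℤ) : ℝ) / (c * d)) =
    (Real.sqrt d : ℂ) * χ ((c : ZMod d) * (ℓ₂ : ZMod d)) *
      ∑ a₂ : ZMod c,
        klS (-(a₁ * (a₂.val : ℤ) * d)) r c * e ((((a₂.val : ℤ) * ℓ₂ : ℤ) : ℝ) / c) := by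
  have hd0 : (d : ℝ) ≠ 0 := Nat.cast_ne_zero.2 (NeZero.ne d)
  have hc0 : (c : ℝ) ≠ 0 := Nat.cast_ne_zero.2 (NeZero.ne c)
  have key : ∀ z : ZMod c × ZMod d,
      χ (ZMod.castHom (dvd_mul_left d c) (ZMod d)
          ((z.1.val * d + z.2.val * c : ℕ) : ZMod (c * d))) *
        klS (-(a₁ * (((z.1.val * d + z.2.val * c : ℕ) : ZMod (c * d)).val : ℤ))) r c *
        e ((((((z.1.val * d + z.2.val * c : ℕ) : ZMod (c * d)).val : ℤ) * ℓ₂ : ℤ) : ℝ) /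
          (c * d)) =
      χ c * ((klS (-(a₁ * (z.1.val : ℤ) * d)) r c * e ((((z.1.val : ℤ) * ℓ₂ : ℤ) : ℝ) / c)) *
        (χ z.2 * e ((((z.2.val : ℤ) * ℓ₂ : ℤ) : ℝ) / d))) := by
    rintro ⟨x, y⟩
    have hval : ((((x.val * d + y.val * c : ℕ) : ZMod (c * d)).val : ℤ) : ZMod (c * d)) =
        ((x.val * d + y.val * c : ℕ) : ℤ) := by
      simp only [Int.cast_natCast, ZMod.natCast_zmod_val]
    have hK := congrArg (ZMod.castHom (dvd_mul_right c d) (ZMod c)) hval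
    simp only [map_intCast] at hK
    have hk : klS (-(a₁ * (((x.val * d + y.val * c : ℕ) : ZMod (c * d)).val : ℤ))) r c =
        klS (-(a₁ * (x.val : ℤ) * d)) r c := by
      apply klS_congr
      rw [Int.cast_neg, Int.cast_mul, hK]
      push_cast
      rw [ZMod.natCast_self]
      ring
    have he : e (((((((x.val * d + y.val * c : ℕ) : ZMod (c * d)).val : ℤ) * ℓ₂ : ℤ) : ℝ)) /
          (c * d)) =
        e ((((x.val : ℤ) * ℓ₂ : ℤ) : ℝ) / c) * e ((((y.val : ℤ) * ℓ₂ : ℤ) : ℝ) / d) := by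
      have := e_intCast_mul_div_congr ℓ₂ hval
      rw [Nat.cast_mul] at this
      rw [this, ← e_add]
      congr 1
      push_cast
      field_simp
    have hx : χ (ZMod.castHom (dvd_mul_left d c) (ZMod d)
        ((x.val * d + y.val * c : ℕ) : ZMod (c * d))) = χ c * χ y := by
      rw [map_natCast, ← map_mul]
      push_cast
      rw [ZMod.natCast_self, ZMod.natCast_zmod_val y]
      congr 1
      ring
    rw [hk, he, hx]
    ring
  rw [← (ZMod.bijective_val_mul_add_val_mul hcd).sum_comp]
  simp only [key]
  rw [← Finset.mul_sum, Fintype.sum_prod_type]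
  dsimp only
  rw [← Fintype.sum_mul_sum, DirichletCharacter.sum_mul_e_eq hd4 hχ2 hχ1, map_mul]
  ring
end
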